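/- Let P_R ⊂ Σ, where Σ ⊂ ℝ^d is a compact hypersurface that is the graph of a C² function over [0,1]^{d−1} with bounded Hessian, with |P_R| ≥ c R^{2d/p}, and suppose (1/R^d)∫_{[0,R]^d}|∑_{ξ∈P_R} a_ξ e(ξ·x)|^p dx ≤ C‖a_ξ‖_{ℓ²}^p for all complex a_ξ with constants independent of R. Then p ≥ 2(d+1)/(d−1). -/

import Mathlib

open MeasureTheory Complex

noncomputable def e (z : ℝ) : ℂ := Complex.exp (2 * Real.pi * Complex.I * z)

def unitCube (m : ℕ) : Set (Fin m → ℝ) := Set.univ.pi fun _ => Set.Icc 0 1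


lemma aux_taylor {m : ℕ} (f : (Fin m → ℝ) → ℝ) (hf : ContDiff ℝ 2 f) (H : ℝ)
    (hH : ∀ η, ‖iteratedFDeriv ℝ 2 f η‖ ≤ H) :
    (∀ a b, ‖fderiv ℝ f a - fderiv ℝ f b‖ ≤ H * ‖a - b‖) ∧
    ∀ a b, |f b - f a - fderiv ℝ f a (b - a)| ≤ H * ‖b - a‖ ^ 2 := by
  have h0 : 0 ≤ H := (norm_nonneg _).trans (hH 0)
  have hd : ContDiff ℝ 1 (fderiv ℝ f) := hf.fderiv_right (by norm_num)
  have hL : ∀ a b, ‖fderiv ℝ f a - fderiv ℝ f b‖ ≤ H * ‖a - b‖ := by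
    intro a b
    refine Convex.norm_image_sub_le_of_norm_fderiv_le (𝕜 := ℝ) (s := Set.univ)
      (fun x _ => (hd.differentiable (by norm_num)) x) (fun x _ => ?_) convex_univ
      (Set.mem_univ _) (Set.mem_univ _)
    rw [← norm_iteratedFDeriv_one, norm_iteratedFDeriv_fderiv]
    exact hH x
  refine ⟨hL, fun a b => ?_⟩
  have := Convex.norm_image_sub_le_of_norm_fderiv_le' (𝕜 := ℝ) (f := f)
      (φ := fderiv ℝ f a) (C := H * ‖b - a‖)
      (s := Metric.closedBall a ‖b - a‖) (x := a) (y := b)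
      (fun x _ => (hf.differentiable (by norm_num)) x) (fun x hx => ?_) (convex_closedBall _ _)
      (by simp) (by simp [dist_eq_norm])
  · rw [Real.norm_eq_abs] at this
    linarith
  · refine (hL x a).trans ?_
    rw [Metric.mem_closedBall, dist_eq_norm] at hx
    gcongr

lemma aux_pigeon {m : ℕ} (P : Finset (Fin m → ℝ)) (hP : ∀ η ∈ P, η ∈ unitCube m) (R : ℝ)
    (hR : 1 ≤ R) (hne : P.Nonempty) :
    ∃ Q ⊆ P, Q.Nonempty ∧ (P.card : ℝ) ≤ (3 * √R) ^ m * Q.card ∧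
      ∀ a ∈ Q, ∀ b ∈ Q, ‖a - b‖ * √R ≤ 1 := by
  classical
  have hs : 1 ≤ √R := by rwa [Real.one_le_sqrt]
  set n := ⌈√R⌉₊ with hn
  have hn1 : √R ≤ n := Nat.le_ceil _
  have hn2 : (n : ℝ) < √R + 1 := Nat.ceil_lt_add_one (by positivity)
  let F : (Fin m → ℝ) → (Fin m → ℕ) := fun η i => ⌊n * η i⌋₊
  have hmaps : ∀ a ∈ P, F a ∈ Fintype.piFinset (fun _ : Fin m => Finset.range (n + 1)) := by
    intro a ha
    rw [Fintype.mem_piFinset]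
    intro i
    have h := hP a ha i (Set.mem_univ _)
    rw [Finset.mem_range, Nat.lt_succ_iff]
    apply Nat.floor_le_of_le
    have := h.2
    have : (0:ℝ) ≤ n := by positivity
    nlinarith
  have hcard : (Fintype.piFinset (fun _ : Fin m => Finset.range (n + 1))).card = (n + 1) ^ m := by
    simp
  obtain ⟨y, hy, hle⟩ := Finset.exists_le_card_fiber_of_nsmul_le_card_of_maps_to (M := ℝ) hmaps
    (b := (P.card : ℝ) / ((n + 1 : ℕ) ^ m : ℝ)) (by
      rw [← Finset.card_pos, hcard]
      positivity) (by
      rw [hcard, nsmul_eq_mul]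
      apply le_of_eq
      push_cast
      field_simp)
  have hPpos : (0:ℝ) < P.card := by exact_mod_cast hne.card_pos
  have hle' := (div_le_iff₀ (by positivity)).1 hle
  refine ⟨P.filter (fun x => F x = y), Finset.filter_subset _ _, ?_, ?_, ?_⟩
  · rw [← Finset.card_pos]
    have : (0:ℝ) < (P.card : ℝ) / ((n + 1 : ℕ) ^ m : ℝ) := by positivity
    exact_mod_cast this.trans_le hle
  · refine hle'.trans ?_
    rw [mul_comm]
    gcongr
    push_cast
    linarith
  · intro a ha b hb
    rw [Finset.mem_filter] at ha hb
    rw [← le_div_iff₀ (by positivity)]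
    refine (pi_norm_le_iff_of_nonneg (by positivity)).2 fun i => ?_
    have e1 : ⌊n * a i⌋₊ = ⌊n * b i⌋₊ := by
      have := congrFun (ha.2.trans hb.2.symm) i
      exact this
    have a0 := (hP a ha.1 i (Set.mem_univ _)).1
    have b0 := (hP b hb.1 i (Set.mem_univ _)).1
    have := Nat.floor_le (show 0 ≤ n * a i by positivity)
    have := Nat.floor_le (show 0 ≤ n * b i by positivity)
    have := Nat.lt_floor_add_one (n * a i)
    have := Nat.lt_floor_add_one (n * b i)
    rw [e1] at *
    rw [Pi.sub_apply, Real.norm_eq_abs, le_div_iff₀ (by positivity)]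
    calc |a i - b i| * √R ≤ |a i - b i| * n := by gcongr
      _ = |n * a i - n * b i| := by
        rw [← mul_sub, abs_mul, mul_comm, Nat.abs_cast]
      _ ≤ 1 := by rw [abs_le]; constructor <;> linarith

lemma aux_e_sub (z : ℝ) (hz : |z| ≤ 1 / 100) : ‖e z - 1‖ ≤ 1 / 2 := by
  unfold e
  have h := Real.norm_exp_I_mul_ofReal_sub_one_le (x := 2 * Real.pi * z)
  have h2 : (2 * Real.pi * Complex.I * z : ℂ) = Complex.I * ((2 * Real.pi * z : ℝ) : ℂ) := by
    push_cast; ring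
  rw [h2]
  refine h.trans ?_
  rw [Real.norm_eq_abs, abs_mul, abs_of_pos (by positivity)]
  nlinarith [Real.pi_lt_four, Real.pi_pos, abs_nonneg z]

lemma aux_e_add (x y : ℝ) : e (x + y) = e x * e y := by
  unfold e
  rw [← Complex.exp_add]
  congr 1
  push_cast
  ring

lemma aux_e_norm (x : ℝ) : ‖e x‖ = 1 := by
  unfold e
  have h2 : (2 * Real.pi * Complex.I * x : ℂ) = ((2 * Real.pi * x : ℝ) : ℂ) * Complex.I := by
    push_cast; ring
  rw [h2, Complex.norm_exp_ofReal_mul_I]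

lemma aux_e_cont : Continuous e := by
  unfold e
  fun_prop

lemma aux_sum {ι : Type*} (Q : Finset ι) (φ : ι → ℝ) (z : ℝ)
    (h : ∀ i ∈ Q, |φ i - z| ≤ 1 / 100) : (Q.card : ℝ) / 2 ≤ ‖∑ i ∈ Q, e (φ i)‖ := by
  have h1 : ‖∑ i ∈ Q, (e (φ i) - e z)‖ ≤ ∑ i ∈ Q, (1 / 2 : ℝ) := by
    refine norm_sum_le_of_le _ fun i hi => ?_
    have : e (φ i) - e z = (e (φ i - z) - 1) * e z := by
      rw [sub_mul, ← aux_e_add]; simp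
    rw [this, norm_mul, aux_e_norm, mul_one]
    exact aux_e_sub _ (h i hi)
  rw [Finset.sum_sub_distrib] at h1
  simp only [Finset.sum_const, nsmul_eq_mul] at h1
  have h2 : ‖(Q.card : ℂ) * e z‖ = Q.card := by
    rw [norm_mul, aux_e_norm]; simp
  have h3 := norm_sub_norm_le ((Q.card : ℂ) * e z) (∑ i ∈ Q, e (φ i))
  rw [norm_sub_rev] at h3
  linarith

/-- the dual box -/
def auxBox (m : ℕ) (R δ : ℝ) (g : Fin m → ℝ) : Set ((Fin m → ℝ) × ℝ) :=
  {x | x.2 ∈ Set.Icc 0 (δ * R) ∧ ∀ i, |x.1 i - R / 2 + x.2 * g i| ≤ δ * √R}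

lemma aux_meas (m : ℕ) (R δ : ℝ) (g : Fin m → ℝ) : MeasurableSet (auxBox m R δ g) := by
  apply IsClosed.measurableSet
  unfold auxBox
  rw [Set.ofPred_and, Set.ofPred_forall]
  refine (isClosed_Icc.preimage continuous_snd).inter (isClosed_iInter fun i => ?_)
  exact isClosed_le (by fun_prop) (by fun_prop)

lemma aux_vol (m : ℕ) (R δ : ℝ) (g : Fin m → ℝ) (hR : 0 ≤ R) (hδ : 0 ≤ δ) :
    volume (auxBox m R δ g) = ENNReal.ofReal ((2 * δ * √R) ^ m * (δ * R)) := by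
  rw [Measure.volume_eq_prod, Measure.prod_apply_symm (aux_meas m R δ g)]
  have : ∀ t : ℝ, volume ((fun x => (x, t)) ⁻¹' auxBox m R δ g) =
      (Set.Icc 0 (δ * R)).indicator (fun _ => ENNReal.ofReal ((2 * δ * √R) ^ m)) t := by
    intro t
    by_cases ht : t ∈ Set.Icc 0 (δ * R)
    · rw [Set.indicator_of_mem ht]
      have : (fun x => (x, t)) ⁻¹' auxBox m R δ g =
          Set.univ.pi fun i => Set.Icc (R / 2 - t * g i - δ * √R) (R / 2 - t * g i + δ * √R) := by
        ext x
        simp only [auxBox, Set.mem_preimage, Set.mem_ofPred_eq, Set.mem_univ_pi,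
          Set.mem_Icc, abs_le]
        rw [and_iff_right (Set.mem_Icc.1 ht)]
        refine forall_congr' fun i => ?_
        constructor <;> rintro ⟨h1, h2⟩ <;> constructor <;> linarith
      rw [this, volume_pi_pi]
      simp only [Real.volume_Icc]
      rw [ENNReal.ofReal_pow (by positivity)]
      rw [Finset.prod_congr rfl (g := fun _ => ENNReal.ofReal (2 * δ * √R))]
      · simp
      · intro i _
        congr 1; ring
    · rw [Set.indicator_of_notMem ht]
      have : (fun x => (x, t)) ⁻¹' auxBox m R δ g = ∅ := by
        ext x
        simp only [auxBox, Set.mem_preimage, Set.mem_ofPred_eq, ht, false_and, Set.mem_empty_iff_false]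
      rw [this, measure_empty]
  simp_rw [this]
  rw [lintegral_indicator measurableSet_Icc, setLIntegral_const, Real.volume_Icc, sub_zero,
    ← ENNReal.ofReal_mul (by positivity)]

lemma aux_sub (m : ℕ) (R δ G : ℝ) (g : Fin m → ℝ) (hR : 1 ≤ R) (hδ : 0 ≤ δ)
    (hδ1 : δ ≤ 1 / 4) (hδG : δ * G ≤ 1 / 4) (hg : ∀ i, |g i| ≤ G) :
    auxBox m R δ g ⊆ (Set.univ.pi fun _ : Fin m => Set.Icc (0:ℝ) R) ×ˢ Set.Icc (0:ℝ) R := by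
  rintro ⟨x, t⟩ ⟨⟨ht0, ht1⟩, hx⟩
  simp only at ht0 ht1 hx
  have hs : √R ≤ R := by
    rw [Real.sqrt_le_left (by linarith)]; nlinarith
  refine ⟨fun i _ => ?_, ht0, ?_⟩
  · have h1 : |t * g i| ≤ R / 4 := by
      rw [abs_mul, abs_of_nonneg ht0]
      calc t * |g i| ≤ (δ * R) * G := mul_le_mul ht1 (hg i) (abs_nonneg _) (by positivity)
        _ ≤ R / 4 := by nlinarith
    have h2 : δ * √R ≤ R / 4 := by nlinarith [Real.sqrt_nonneg R]
    have h3 := abs_le.1 (hx i)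
    have h4 := abs_le.1 h1
    constructor <;> simp only <;> linarith [h3.1, h3.2, h4.1, h4.2]
  · simp only; nlinarith

lemma aux_key {m : ℕ} (f : (Fin m → ℝ) → ℝ) (hf : ContDiff ℝ 2 f) (H p C R G δ : ℝ) (hp : 2 ≤ p)
    (hH : ∀ η, ‖iteratedFDeriv ℝ 2 f η‖ ≤ H) (P : Finset (Fin m → ℝ))
    (hP : ∀ η ∈ P, η ∈ unitCube m) (hR : 1 ≤ R) (hne : P.Nonempty)
    (hG : ∀ η ∈ unitCube m, ‖fderiv ℝ f η‖ ≤ G) (hδ : 0 < δ)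
    (hδ1 : δ ≤ 1 / 4) (hδG : δ * G ≤ 1 / 4) (hδH : δ * (m + H) ≤ 1 / 100)
    (hdec : ∀ a : (Fin m → ℝ) → ℂ,
      (1 / R ^ ((m : ℝ) + 1)) *
          ∫ x in (Set.univ.pi fun _ : Fin m => Set.Icc (0:ℝ) R) ×ˢ Set.Icc (0:ℝ) R,
            ‖∑ η ∈ P, a η * e (∑ i, η i * x.1 i + f η * x.2)‖ ^ p
        ≤ C * Real.sqrt (∑ η ∈ P, ‖a η‖ ^ 2) ^ p) :
    ∃ N : ℝ, 0 < N ∧ (P.card : ℝ) ≤ (3 * √R) ^ m * N ∧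
      (1 / R ^ ((m : ℝ) + 1)) * ((N / 2) ^ p * ((2 * δ * √R) ^ m * (δ * R))) ≤ C * √N ^ p := by
  classical
  obtain ⟨hL, hT⟩ := aux_taylor f hf H hH
  have hH0 : 0 ≤ H := (norm_nonneg _).trans (hH 0)
  obtain ⟨Q, hQP, ⟨η₀, hη₀⟩, hcard, hdiam⟩ := aux_pigeon P hP R hR hne
  have hs : 1 ≤ √R := by rwa [Real.one_le_sqrt]
  have hss : √R * √R = R := Real.mul_self_sqrt (by linarith)
  refine ⟨Q.card, by exact_mod_cast Finset.card_pos.2 ⟨_, hη₀⟩, hcard, ?_⟩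
  let a : (Fin m → ℝ) → ℂ := fun η => if η ∈ Q then e (-∑ i, η i * (R / 2)) else 0
  let g : Fin m → ℝ := fun i => fderiv ℝ f η₀ (Pi.single i 1)
  have hg : ∀ i, |g i| ≤ G := by
    intro i
    have := (fderiv ℝ f η₀).le_opNorm (Pi.single i 1)
    rw [Pi.norm_single, norm_one, mul_one] at this
    exact this.trans (hG _ (hP _ (hQP hη₀)))
  have hlin : ∀ v : Fin m → ℝ, fderiv ℝ f η₀ v = ∑ i, v i * g i := by
    intro v
    conv_lhs => rw [pi_eq_sum_univ' v]
    rw [map_sum]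
    refine Finset.sum_congr rfl fun i _ => ?_
    rw [map_smul, smul_eq_mul]
  have hsum : ∀ x : (Fin m → ℝ) × ℝ, ∑ η ∈ P, a η * e (∑ i, η i * x.1 i + f η * x.2) =
      ∑ η ∈ Q, e (∑ i, η i * (x.1 i - R / 2) + f η * x.2) := by
    intro x
    rw [← Finset.sum_subset hQP]
    · refine Finset.sum_congr rfl fun η hη => ?_
      simp only [a, if_pos hη]
      rw [← aux_e_add]
      congr 1
      simp only [mul_sub, Finset.sum_sub_distrib]
      ring
    · intro η _ hη
      simp [a, hη]
  have hlow : ∀ x ∈ auxBox m R δ g,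
      ((Q.card : ℝ) / 2) ^ p ≤ ‖∑ η ∈ P, a η * e (∑ i, η i * x.1 i + f η * x.2)‖ ^ p := by
    intro x hx
    rw [hsum]
    refine Real.rpow_le_rpow (div_nonneg (Nat.cast_nonneg _) zero_le_two) ?_ (by linarith)
    refine aux_sum Q _ (∑ i, η₀ i * (x.1 i - R / 2) + f η₀ * x.2) fun η hη => ?_
    obtain ⟨⟨ht0, ht1⟩, hx⟩ := hx
    have hdi := hdiam η hη η₀ hη₀
    have e1 : ∑ i, η i * (x.1 i - R / 2) + f η * x.2 -
        (∑ i, η₀ i * (x.1 i - R / 2) + f η₀ * x.2) =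
        ∑ i, (η i - η₀ i) * (x.1 i - R / 2 + x.2 * g i) +
          x.2 * (f η - f η₀ - fderiv ℝ f η₀ (η - η₀)) := by
      rw [hlin, mul_sub, Finset.mul_sum]
      have : ∀ i, (η i - η₀ i) * (x.1 i - R / 2 + x.2 * g i) =
        η i * (x.1 i - R / 2) - η₀ i * (x.1 i - R / 2) + x.2 * ((η - η₀) i * g i) := by
        intro i; rw [Pi.sub_apply]; ring
      rw [Finset.sum_congr rfl fun i _ => this i, Finset.sum_add_distrib, Finset.sum_sub_distrib]
      ring
    have e2 : |∑ i, (η i - η₀ i) * (x.1 i - R / 2 + x.2 * g i)| ≤ m * δ := by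
      refine (Finset.abs_sum_le_sum_abs _ _).trans ?_
      refine (Finset.sum_le_card_nsmul _ _ δ fun i _ => ?_).trans (by simp)
      rw [abs_mul]
      calc |η i - η₀ i| * |x.1 i - R / 2 + x.2 * g i| ≤ ‖η - η₀‖ * (δ * √R) :=
            mul_le_mul (norm_le_pi_norm (η - η₀) i) (hx i) (abs_nonneg _) (norm_nonneg _)
        _ = δ * (‖η - η₀‖ * √R) := by ring
        _ ≤ δ * 1 := by gcongr
        _ = δ := mul_one _
    have e3 : |x.2 * (f η - f η₀ - fderiv ℝ f η₀ (η - η₀))| ≤ δ * H := by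
      rw [abs_mul, abs_of_nonneg ht0]
      calc x.2 * |f η - f η₀ - fderiv ℝ f η₀ (η - η₀)| ≤ (δ * R) * (H * ‖η - η₀‖ ^ 2) :=
            mul_le_mul ht1 (hT _ _) (abs_nonneg _) (by positivity)
        _ = δ * H * (‖η - η₀‖ * √R) ^ 2 := by rw [mul_pow, pow_two (√R), hss]; ring
        _ ≤ δ * H * 1 ^ 2 := by gcongr
        _ = δ * H := by ring
    rw [e1]
    refine (abs_add_le _ _).trans ?_
    linarith
  have hcont : Continuous fun x : (Fin m → ℝ) × ℝ =>
      ‖∑ η ∈ P, a η * e (∑ i, η i * x.1 i + f η * x.2)‖ ^ p := by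
    refine Continuous.rpow_const ?_ fun x => Or.inr (by linarith)
    refine continuous_norm.comp (continuous_finset_sum _ fun η _ => ?_)
    exact continuous_const.mul (aux_e_cont.comp (by fun_prop))
  have hint : IntegrableOn (fun x : (Fin m → ℝ) × ℝ =>
      ‖∑ η ∈ P, a η * e (∑ i, η i * x.1 i + f η * x.2)‖ ^ p)
      ((Set.univ.pi fun _ : Fin m => Set.Icc (0:ℝ) R) ×ˢ Set.Icc (0:ℝ) R) :=
    hcont.continuousOn.integrableOn_compact
      ((isCompact_univ_pi fun _ => isCompact_Icc).prod isCompact_Icc)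
  have hsub := aux_sub m R δ G g hR hδ.le hδ1 hδG hg
  have hvol := aux_vol m R δ g (by linarith) hδ.le
  have h1 := setIntegral_ge_of_const_le_real (aux_meas m R δ g) (by rw [hvol]; exact ENNReal.ofReal_ne_top)
    hlow (hint.mono_set hsub)
  have h2 := setIntegral_mono_set hint
    (Filter.Eventually.of_forall fun x => by simp only [Pi.zero_apply]; positivity)
    (HasSubset.Subset.eventuallyLE hsub)
  have h3 := hdec a
  have h4 : ∑ η ∈ P, ‖a η‖ ^ 2 = Q.card := by
    rw [← Finset.sum_subset hQP]
    · rw [Finset.sum_congr rfl (g := fun _ => (1:ℝ))]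
      · simp
      · intro η hη
        simp [a, hη, aux_e_norm]
    · intro η _ hη
      simp [a, hη]
  rw [h4] at h3
  refine le_trans ?_ h3
  refine mul_le_mul_of_nonneg_left ?_ (by positivity)
  refine le_trans ?_ (h1.trans h2)
  rw [Measure.real, hvol, ENNReal.toReal_ofReal (by positivity)]

lemma aux_arith (m : ℕ) (p C c R δ N : ℝ) (hp : 2 ≤ p) (hc : 0 < c) (hR : 1 ≤ R)
    (hδ : 0 < δ) (hN : 0 < N)
    (h1 : c * R ^ (2 * ((m : ℝ) + 1) / p) ≤ (3 * √R) ^ m * N)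
    (h2 : (1 / R ^ ((m : ℝ) + 1)) * ((N / 2) ^ p * ((2 * δ * √R) ^ m * (δ * R))) ≤ C * √N ^ p) :
    ((2 * δ) ^ m * δ / 2 ^ p * (c / 3 ^ m) ^ (p / 2)) *
      R ^ ((m : ℝ) + 1 - m * p / 4 - m / 2) ≤ C := by
  have hR0 : 0 < R := by linarith
  have hsm : √R ^ m = R ^ ((m : ℝ) / 2) := by
    rw [Real.sqrt_eq_rpow, ← Real.rpow_natCast, ← Real.rpow_mul hR0.le]
    congr 1; ring
  have hsN : √N ^ p = N ^ (p / 2) := by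
    rw [Real.sqrt_eq_rpow, ← Real.rpow_mul hN.le]
    congr 1; ring
  have hNp : N ^ p = N ^ (p / 2) * N ^ (p / 2) := by
    rw [← Real.rpow_add hN]; congr 1; ring
  rw [mul_pow, hsm] at h1
  rw [hsN, mul_pow _ (√R), hsm, Real.div_rpow hN.le (by norm_num), hNp] at h2
  have hNpos : 0 < N ^ (p / 2) := by positivity
  have hRm : R ^ ((m : ℝ) + 1) = R ^ ((m : ℝ) / 2) * R ^ ((m : ℝ) / 2) * R := by
    rw [← Real.rpow_add hR0, ← Real.rpow_add_one hR0.ne']; congr 1; ring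
  have hRpos : 0 < R ^ ((m : ℝ) / 2) := by positivity
  have h3 : (2 * δ) ^ m * δ / 2 ^ p * N ^ (p / 2) / R ^ ((m : ℝ) / 2) ≤ C := by
    refine le_of_mul_le_mul_right ?_ hNpos
    refine le_trans (le_of_eq ?_) h2
    rw [hRm]
    field_simp
  have h4 : c / 3 ^ m * R ^ (2 * ((m : ℝ) + 1) / p - m / 2) ≤ N := by
    rw [Real.rpow_sub hR0]
    have : c / 3 ^ m * (R ^ (2 * ((m : ℝ) + 1) / p) / R ^ ((m : ℝ) / 2)) =
      (c * R ^ (2 * ((m : ℝ) + 1) / p)) / (3 ^ m * R ^ ((m : ℝ) / 2)) := by field_simp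
    rw [this, div_le_iff₀ (by positivity)]
    linarith
  have h5 := Real.rpow_le_rpow (by positivity) h4 (show 0 ≤ p / 2 by linarith)
  rw [Real.mul_rpow (by positivity) (by positivity), ← Real.rpow_mul hR0.le] at h5
  have hexp : (2 * ((m : ℝ) + 1) / p - m / 2) * (p / 2) = (m : ℝ) + 1 - m * p / 4 := by
    have : p ≠ 0 := by linarith
    field_simp
    ring
  rw [hexp] at h5
  refine le_trans ?_ h3
  rw [Real.rpow_sub hR0, mul_assoc, ← mul_div_assoc ((c / 3 ^ m) ^ (p / 2)), ← mul_div_assoc]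
  gcongr

lemma aux_main (m : ℕ) (hm : 1 ≤ m) (p c C R₀ H : ℝ) (hp : 2 ≤ p)
    (hc : 0 < c) (hR₀ : 1 ≤ R₀)
    (f : (Fin m → ℝ) → ℝ) (hf : ContDiff ℝ 2 f)
    (hHess : ∀ η, ‖iteratedFDeriv ℝ 2 f η‖ ≤ H)
    (P : ℝ → Finset (Fin m → ℝ))
    (hPloc : ∀ R ≥ R₀, ∀ η ∈ P R, η ∈ unitCube m)
    (hPcard : ∀ R ≥ R₀, c * R ^ (2*((m:ℝ)+1)/p) ≤ ((P R).card : ℝ))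
    (hdec : ∀ R ≥ R₀, ∀ a : (Fin m → ℝ) → ℂ,
      (1 / R ^ ((m:ℝ)+1)) *
          ∫ x in (Set.univ.pi fun _ : Fin m => Set.Icc (0:ℝ) R) ×ˢ
              Set.Icc (0:ℝ) R,
            ‖∑ η ∈ P R, a η * e (∑ i, η i * x.1 i + f η * x.2)‖ ^ p
        ≤ C * Real.sqrt (∑ η ∈ P R, ‖a η‖ ^ 2) ^ p) :
    2 * ((m:ℝ) + 2) / m ≤ p := by
  by_contra hcon
  have hm0 : (0:ℝ) < m := by exact_mod_cast hm
  rw [not_le, lt_div_iff₀ hm0] at hcon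
  have hs : 0 < (m : ℝ) + 1 - m * p / 4 - m / 2 := by linarith
  have hH0 : 0 ≤ H := (norm_nonneg _).trans (hHess 0)
  set G := ‖fderiv ℝ f 0‖ + H with hGdef
  have hG0 : 0 ≤ G := by positivity
  have hG : ∀ η ∈ unitCube m, ‖fderiv ℝ f η‖ ≤ G := by
    intro η hη
    have h1 := (aux_taylor f hf H hHess).1 η 0
    have h2 : ‖η‖ ≤ 1 := by
      refine (pi_norm_le_iff_of_nonneg zero_le_one).2 fun i => ?_
      have := hη i (Set.mem_univ _)
      rw [Real.norm_eq_abs, abs_le]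
      constructor <;> linarith [this.1, this.2]
    have h3 := norm_sub_norm_le (fderiv ℝ f η) (fderiv ℝ f 0)
    rw [sub_zero] at h1
    nlinarith
  set D := 100 * (m + H + G + 1) with hD
  have hDpos : 0 < D := by positivity
  have hδ1 : 1 / D ≤ 1 / 4 := by
    rw [div_le_div_iff₀ hDpos (by norm_num)]; linarith
  have hδG : 1 / D * G ≤ 1 / 4 := by
    rw [one_div_mul_eq_div, div_le_div_iff₀ hDpos (by norm_num)]; linarith
  have hδH : 1 / D * (m + H) ≤ 1 / 100 := by
    rw [one_div_mul_eq_div, div_le_div_iff₀ hDpos (by norm_num)]; linarith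
  have hδ : 0 < 1 / D := by positivity
  set K := ((2 * (1 / D)) ^ m * (1 / D) / 2 ^ p * (c / 3 ^ m) ^ (p / 2)) with hK
  have hKpos : 0 < K := by positivity
  have hb : ∀ R ≥ R₀, K * R ^ ((m : ℝ) + 1 - m * p / 4 - m / 2) ≤ C := by
    intro R hR
    have hR1 : 1 ≤ R := hR₀.trans hR
    have hne : (P R).Nonempty := by
      rw [← Finset.card_pos]
      have : 0 < c * R ^ (2*((m:ℝ)+1)/p) := by positivity
      exact_mod_cast this.trans_le (hPcard R hR)
    obtain ⟨N, hN, h1, h2⟩ := aux_key f hf H p C R G (1 / D) hp hHess (P R) (hPloc R hR) hR1 hne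
      hG hδ hδ1 hδG hδH (hdec R hR)
    exact aux_arith m p C c R (1 / D) N hp hc hR1 hδ hN ((hPcard R hR).trans h1) h2
  obtain ⟨R, hR, hgt⟩ := ((Filter.eventually_ge_atTop R₀).and
    ((tendsto_rpow_atTop hs).eventually_gt_atTop (C / K))).exists
  have := hb R hR
  rw [div_lt_iff₀ hKpos] at hgt
  linarith

theorem stmt19 (d : ℕ) (hd : 2 ≤ d) (p c C R₀ H : ℝ) (hp : 2 ≤ p)
    (hc : 0 < c) (hC : 0 < C) (hR₀ : 1 ≤ R₀)
    (Pi : (Fin (d-1) → ℝ) → ℝ) (hPi : ContDiff ℝ 2 Pi)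
    (hHess : ∀ η, ‖iteratedFDeriv ℝ 2 Pi η‖ ≤ H)
    (P : ℝ → Finset (Fin (d-1) → ℝ))
    (hPloc : ∀ R ≥ R₀, ∀ η ∈ P R, η ∈ unitCube (d-1))
    (hPcard : ∀ R ≥ R₀, c * R ^ (2*(d:ℝ)/p) ≤ ((P R).card : ℝ))
    (hdec : ∀ R ≥ R₀, ∀ a : (Fin (d-1) → ℝ) → ℂ,
      (1 / R ^ (d:ℝ)) *
          ∫ x in (Set.univ.pi fun _ : Fin (d-1) => Set.Icc (0:ℝ) R) ×ˢ
              Set.Icc (0:ℝ) R,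
            ‖∑ η ∈ P R, a η * e (∑ i, η i * x.1 i + Pi η * x.2)‖ ^ p
        ≤ C * Real.sqrt (∑ η ∈ P R, ‖a η‖ ^ 2) ^ p) :
    2 * ((d:ℝ) + 1) / ((d:ℝ) - 1) ≤ p := by
  obtain ⟨m, rfl⟩ : ∃ m, d = m + 1 := ⟨d - 1, by omega⟩
  have h := aux_main m (by omega) p c C R₀ H hp hc hR₀ Pi hPi hHess P hPloc
    (by intro R hR; have := hPcard R hR; push_cast at this; exact this)
    (by intro R hR a; have := hdec R hR a; push_cast at this; exact this)
  push_cast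
  rw [show (m : ℝ) + 1 + 1 = m + 2 by ring, show (m : ℝ) + 1 - 1 = m by ring]
  exact h
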